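/- arXiv:1907.07600 — 4 statements merged into one kernel-verified Lean document; each statement's English description precedes it below -/
import Mathlib

section
/- Let (V, ‖·‖) be a normed vector space, let γ ≥ 0, c ≥ 0, and let a ∈ (0,1) with γ < a. Let {z[k]}_{k≥0} and {e[k]}_{k≥0} be sequences in V such that ‖z[k+1]‖ ≤ γ·‖z[k]‖ + c·‖e[k]‖ for all k ≥ 0. Then for every K ≥ 0: max_{0≤k≤K} a^{−k}‖z[k]‖ ≤ (c/(a − γ))·max_{0≤k≤K} a^{−k}‖e[k]‖ + (a/(a − γ))·‖z[0]‖. -/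
theorem stmt1 {V : Type*} [NormedAddCommGroup V] [NormedSpace ℝ V]
    (γ c a : ℝ) (hγ : 0 ≤ γ) (hc : 0 ≤ c) (ha : a ∈ Set.Ioo (0 : ℝ) 1) (hγa : γ < a)
    (z e : ℕ → V) (hrec : ∀ k : ℕ, ‖z (k + 1)‖ ≤ γ * ‖z k‖ + c * ‖e k‖) :
    ∀ K : ℕ,
      (Finset.range (K + 1)).sup' (Finset.nonempty_range_iff.mpr (Nat.succ_ne_zero K))
          (fun k => ‖z k‖ / a ^ k) ≤
        (c / (a - γ)) *
            (Finset.range (K + 1)).sup' (Finset.nonempty_range_iff.mpr (Nat.succ_ne_zero K))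
              (fun k => ‖e k‖ / a ^ k) +
          (a / (a - γ)) * ‖z 0‖ := by
  intro K
  obtain ⟨ha0, _⟩ := ha
  have hd : 0 < a - γ := sub_pos.mpr hγa
  set E := (Finset.range (K + 1)).sup' (Finset.nonempty_range_iff.mpr (Nat.succ_ne_zero K))
              (fun k => ‖e k‖ / a ^ k) with hE
  have hEk : ∀ k, k < K + 1 → ‖e k‖ / a ^ k ≤ E := fun k hk =>
    Finset.le_sup' (fun k => ‖e k‖ / a ^ k) (Finset.mem_range.mpr hk)
  have hE0 : 0 ≤ E := le_trans (by positivity) (hEk 0 (Nat.succ_pos K))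
  have hz0 : 0 ≤ ‖z 0‖ := norm_nonneg _
  obtain ⟨B, hB⟩ : ∃ B, B = (c / (a - γ)) * E + (a / (a - γ)) * ‖z 0‖ := ⟨_, rfl⟩
  rw [← hB]
  have hBm : (a - γ) * B = c * E + a * ‖z 0‖ := by
    rw [hB]; field_simp
  have key : ∀ k, k < K + 1 → ‖z k‖ / a ^ k ≤ B := by
    intro k
    induction k with
    | zero =>
      intro _
      simp only [pow_zero, div_one]
      have h1 : 0 ≤ c * E := mul_nonneg hc hE0
      have h2 : 0 ≤ γ * ‖z 0‖ := mul_nonneg hγ hz0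
      refine le_of_mul_le_mul_left ?_ hd
      rw [hBm]
      linarith
    | succ k ih =>
      intro hk
      have hk' : k < K + 1 := by omega
      have hp : 0 < a ^ k := pow_pos ha0 k
      have h1 := (div_le_iff₀ hp).mp (ih hk')
      have h2 := (div_le_iff₀ hp).mp (hEk k hk')
      rw [div_le_iff₀ (pow_pos ha0 _)]
      calc ‖z (k + 1)‖ ≤ γ * ‖z k‖ + c * ‖e k‖ := hrec k
        _ ≤ γ * (B * a ^ k) + c * (E * a ^ k) := by gcongr
        _ = (γ * B + c * E) * a ^ k := by ring
        _ ≤ (a * B) * a ^ k := by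
          have h3 : 0 ≤ a * ‖z 0‖ := mul_nonneg ha0.le hz0
          apply mul_le_mul_of_nonneg_right _ hp.le
          linarith
        _ = B * a ^ (k + 1) := by ring
  exact Finset.sup'_le _ _ (fun k hk => key k (Finset.mem_range.mp hk))
end

section
/- Let n ≥ 1, let m > 0, let H ∈ ℝ^{n×n} be a real symmetric matrix with vᴴHv ≥ m‖v‖₂² for every v ∈ ℂⁿ (i.e., H ⪰ mI), and let c ∈ (0,1]. Define the (n+1)×(n+1) real matrix B := [[H, −c·𝟙], [𝟙ᵀ, 0]], where 𝟙 ∈ ℝⁿ is the all-ones column vector. Then every eigenvalue μ ∈ ℂ of B satisfies Re(μ) > 0. -/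
open Matrix

theorem stmt2 {n : ℕ} (hn : 1 ≤ n) (m : ℝ) (hm : 0 < m)
    (H : Matrix (Fin n) (Fin n) ℝ) (hsymm : H.IsSymm)
    (hpos : ∀ v : Fin n → ℂ,
      m * ∑ i, Complex.normSq (v i) ≤ (star v ⬝ᵥ (H.map Complex.ofReal) *ᵥ v).re)
    (c : ℝ) (hc : c ∈ Set.Ioc (0 : ℝ) 1)
    (B : Matrix (Fin n ⊕ Fin 1) (Fin n ⊕ Fin 1) ℝ)
    (hB : B = Matrix.fromBlocks H (Matrix.of fun _ _ => -c) (Matrix.of fun _ _ => (1 : ℝ)) 0)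
    (μ : ℂ) (v : Fin n ⊕ Fin 1 → ℂ) (hv : v ≠ 0)
    (heig : (B.map Complex.ofReal) *ᵥ v = μ • v) :
    0 < μ.re := by
  obtain ⟨hc0, -⟩ := hc
  subst hB
  set x : Fin n → ℂ := fun i => v (Sum.inl i) with hx
  set y : ℂ := v (Sum.inr 0) with hy
  have h1 : ∀ i, ((H.map Complex.ofReal) *ᵥ x) i = μ * x i + c * y := by
    intro i
    have h := congrFun heig (Sum.inl i)
    simp [Matrix.mulVec, dotProduct, Fintype.sum_sum_type] at h
    simp only [Matrix.mulVec, dotProduct, Matrix.map_apply, hx, hy]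
    linear_combination h
  have h2 : ∑ i, x i = μ * y := by
    have h := congrFun heig (Sum.inr 0)
    simpa [Matrix.mulVec, dotProduct, Fintype.sum_sum_type] using h
  have h3 : star x ⬝ᵥ (H.map Complex.ofReal) *ᵥ x
      = μ * ((∑ i, Complex.normSq (x i) : ℝ) : ℂ)
        + (starRingEnd ℂ) μ * ((c * Complex.normSq y : ℝ) : ℂ) := by
    have h4 : ∑ i, (starRingEnd ℂ) (x i) = (starRingEnd ℂ) μ * (starRingEnd ℂ) y := by
      rw [← map_sum, h2, map_mul]
    have h5 : star x ⬝ᵥ (H.map Complex.ofReal) *ᵥ x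
        = μ * ∑ i, (x i * (starRingEnd ℂ) (x i)) + c * y * ∑ i, (starRingEnd ℂ) (x i) := by
      rw [Finset.mul_sum, Finset.mul_sum, ← Finset.sum_add_distrib]
      refine Finset.sum_congr rfl fun i _ => ?_
      rw [h1 i, Pi.star_apply, ← starRingEnd_apply]
      ring
    rw [h5, h4]
    push_cast
    simp only [← Complex.mul_conj]
    ring
  have h6 := hpos x
  rw [h3] at h6
  simp only [Complex.add_re, Complex.re_mul_ofReal, Complex.conj_re] at h6
  have hS : 0 < ∑ i, Complex.normSq (x i) := by
    by_contra hcon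
    have h0 : ∑ i, Complex.normSq (x i) = 0 :=
      le_antisymm (not_lt.mp hcon) (Finset.sum_nonneg fun i _ => Complex.normSq_nonneg _)
    rw [Finset.sum_eq_zero_iff_of_nonneg (fun i _ => Complex.normSq_nonneg _)] at h0
    have hx0 : x = 0 := funext fun i => Complex.normSq_eq_zero.mp (h0 i (Finset.mem_univ i))
    have hy0 : y = 0 := by
      have h := h1 ⟨0, hn⟩
      rw [hx0] at h
      simpa [hc0.ne'] using h
    apply hv
    funext j
    rcases j with i | j
    · exact congrFun hx0 i
    · rw [Subsingleton.elim j 0]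
      exact hy0
  have hy1 := mul_nonneg hc0.le (Complex.normSq_nonneg y)
  by_contra hneg
  nlinarith [mul_pos hm hS, mul_nonneg (neg_nonneg.mpr (not_lt.mp hneg)) hS.le,
    mul_nonneg (neg_nonneg.mpr (not_lt.mp hneg)) hy1]
end

section
/- (Proposition 2) Let each f_i : ℝ → ℝ (i = 1,…,n) be twice continuously differentiable with f_i''(x) ≥ m > 0 for all x ∈ [p̲_i, p̄_i], and let {W[k]}_{k≥0} be symmetric doubly stochastic n×n matrices with W_{ij}[k] ≥ η > 0 whenever {i,j} is an edge active at time k, W_{ii}[k] ≥ η, and W_{ij}[k] = 0 otherwise, such that there exists a positive integer B for which the union of the active edge sets over each window {kB, …, (k+1)B − 1} forms a connected graph on {1,…,n}. Consider the distributed primal-dual iterates: p_i[k+1] = Proj_{[p̲_i,p̄_i]}(p_i[k] − s f_i'(p_i[k]) + sξλ_i[k]), λ[k+1] = W[k]λ[k] − s·y[k], y[k+1] = W[k]y[k] + n̂(p[k+1] − p[k]), with y[0] = n̂(p[0] − ℓ), and set λ̂[k] := (1/n̂)𝟙ᵀλ[k], e[k] := λ[k] − (n̂/n)λ̂[k]𝟙,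 z[k] := (p[k] − p*, λ̂[k] − λ*), where (p*, λ*) is the equilibrium of the nominal system. Then there exist a ∈ (0,1), s̄ > 0, α2 > 0 and β2 ≥ 0 (β2 depending on initial conditions) such that for every s ∈ (0, s̄) and every K ≥ 0: ‖e‖₂^{a,K} ≤ s·α2·‖z‖₂^{a,K} + β2. -/
open Matrix

/-- Projection of `x` onto the interval `[lo, hi]`. -/
noncomputable def projI (lo hi x : ℝ) : ℝ := max lo (min hi x)

/-- Euclidean norm of a vector in ℝ^d. -/
noncomputable def eunorm {d : ℕ} (x : Fin d → ℝ) : ℝ := Real.sqrt (∑ i, (x i) ^ 2)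

/-- The weighted norm ‖x‖₂^{a,K} = max_{0 ≤ k ≤ K} a^{-k} ‖x[k]‖₂. -/
noncomputable def wnormSeq {d : ℕ} (a : ℝ) (x : ℕ → Fin d → ℝ) (K : ℕ) : ℝ :=
  (Finset.range (K + 1)).sup' (Finset.nonempty_range_iff.mpr (Nat.succ_ne_zero K))
    fun k => eunorm (x k) / a ^ k


theorem eunorm_eq {d : ℕ} (x : Fin d → ℝ) : eunorm x = ‖WithLp.toLp 2 x‖ := by
  simp [eunorm, EuclideanSpace.norm_eq]

theorem eunorm_nonneg {d : ℕ} (x : Fin d → ℝ) : 0 ≤ eunorm x := Real.sqrt_nonneg _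

theorem eunorm_add_le {d : ℕ} (x y : Fin d → ℝ) : eunorm (x + y) ≤ eunorm x + eunorm y := by
  simp only [eunorm_eq, WithLp.toLp_add]
  exact norm_add_le _ _

theorem eunorm_sub_le {d : ℕ} (x y : Fin d → ℝ) : eunorm (x - y) ≤ eunorm x + eunorm y := by
  simp only [eunorm_eq, WithLp.toLp_sub]
  exact norm_sub_le _ _

theorem eunorm_smul {d : ℕ} (c : ℝ) (hc : 0 ≤ c) (x : Fin d → ℝ) :
    eunorm (c • x) = c * eunorm x := by
  simp only [eunorm_eq, WithLp.toLp_smul, norm_smul, Real.norm_of_nonneg hc]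

theorem eunorm_sq {d : ℕ} (x : Fin d → ℝ) : eunorm x ^ 2 = ∑ i, x i ^ 2 :=
  Real.sq_sqrt (Finset.sum_nonneg fun i _ => sq_nonneg _)

/-- Weighted variance identity. -/
theorem diss_eq {n : ℕ} (W : Matrix (Fin n) (Fin n) ℝ)
    (hrow : ∀ i, ∑ j, W i j = 1) (hcol : ∀ j, ∑ i, W i j = 1) (x : Fin n → ℝ) :
    ∑ i, x i ^ 2 - ∑ i, (W *ᵥ x) i ^ 2 = ∑ i, ∑ j, W i j * (x j - (W *ᵥ x) i) ^ 2 := by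
  have h1 : ∀ i, ∑ j, W i j * (x j - (W *ᵥ x) i) ^ 2
      = ∑ j, W i j * x j ^ 2 - (W *ᵥ x) i ^ 2 := by
    intro i
    have h2 : ∑ j, W i j * x j = (W *ᵥ x) i := rfl
    have h3 : ∀ j, W i j * (x j - (W *ᵥ x) i) ^ 2 =
        W i j * x j ^ 2 - 2 * (W *ᵥ x) i * (W i j * x j) + (W *ᵥ x) i ^ 2 * W i j := by
      intro j; ring
    simp only [h3, Finset.sum_add_distrib, Finset.sum_sub_distrib, ← Finset.mul_sum, hrow, h2]
    ring
  simp only [h1, Finset.sum_sub_distrib]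
  rw [Finset.sum_comm]
  simp only [← Finset.sum_mul, hcol, one_mul]

theorem diss_term {n : ℕ} (W : Matrix (Fin n) (Fin n) ℝ)
    (h0 : ∀ i j, 0 ≤ W i j)
    (hrow : ∀ i, ∑ j, W i j = 1) (hcol : ∀ j, ∑ i, W i j = 1) (x : Fin n → ℝ) (i j : Fin n) :
    W i j * (x j - (W *ᵥ x) i) ^ 2 ≤ ∑ i, x i ^ 2 - ∑ i, (W *ᵥ x) i ^ 2 := by
  rw [diss_eq W hrow hcol x]
  calc W i j * (x j - (W *ᵥ x) i) ^ 2 ≤ ∑ j, W i j * (x j - (W *ᵥ x) i) ^ 2 :=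
        Finset.single_le_sum (f := fun j => W i j * (x j - (W *ᵥ x) i) ^ 2)
          (fun j _ => mul_nonneg (h0 i j) (sq_nonneg _)) (Finset.mem_univ j)
    _ ≤ _ := Finset.single_le_sum (f := fun i => ∑ j, W i j * (x j - (W *ᵥ x) i) ^ 2)
          (fun i _ => Finset.sum_nonneg fun j _ => mul_nonneg (h0 i j) (sq_nonneg _))
          (Finset.mem_univ i)

theorem diss_nonneg {n : ℕ} (W : Matrix (Fin n) (Fin n) ℝ)
    (h0 : ∀ i j, 0 ≤ W i j)
    (hrow : ∀ i, ∑ j, W i j = 1) (hcol : ∀ j, ∑ i, W i j = 1) (x : Fin n → ℝ) :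
    ∑ i, (W *ᵥ x) i ^ 2 ≤ ∑ i, x i ^ 2 := by
  rw [← sub_nonneg, diss_eq W hrow hcol x]
  exact Finset.sum_nonneg fun i _ => Finset.sum_nonneg fun j _ => mul_nonneg (h0 i j) (sq_nonneg _)

theorem eunorm_mulVec_le {n : ℕ} (W : Matrix (Fin n) (Fin n) ℝ)
    (h0 : ∀ i j, 0 ≤ W i j)
    (hrow : ∀ i, ∑ j, W i j = 1) (hcol : ∀ j, ∑ i, W i j = 1) (x : Fin n → ℝ) :
    eunorm (W *ᵥ x) ≤ eunorm x :=
  Real.sqrt_le_sqrt (diss_nonneg W h0 hrow hcol x)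

theorem walk_bound {V : Type*} (G : SimpleGraph V) (x : V → ℝ) (c : ℝ)
    (h : ∀ i j, G.Adj i j → |x i - x j| ≤ c) {i j : V} (w : G.Walk i j) :
    |x i - x j| ≤ w.length * c := by
  induction w with
  | nil => simp
  | @cons u v w' hadj q ih =>
    have h1 := h _ _ hadj
    have h2 := abs_sub_le (x u) (x v) (x w')
    rw [SimpleGraph.Walk.length_cons]
    push_cast
    linarith

theorem conn_bound {n : ℕ} (G : SimpleGraph (Fin n)) (hG : G.Connected) (x : Fin n → ℝ) (c : ℝ)
    (hc : 0 ≤ c)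
    (h : ∀ i j, G.Adj i j → |x i - x j| ≤ c) (i j : Fin n) :
    |x i - x j| ≤ n * c := by
  classical
  obtain ⟨w⟩ := hG.preconnected i j
  have h1 := walk_bound G x c h w.bypass
  have h2 : w.bypass.length < Fintype.card (Fin n) := (w.bypass_isPath).length_lt
  rw [Fintype.card_fin] at h2
  have h3 : (w.bypass.length : ℝ) ≤ n := by exact_mod_cast h2.le
  exact h1.trans (mul_le_mul_of_nonneg_right h3 hc)

/-- Contraction of homogeneous averaging over a jointly connected interval. -/
theorem window_contract {n : ℕ} (hn : 0 < n) (η : ℝ) (hη : 0 < η) (L : ℕ)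
    (W : ℕ → Matrix (Fin n) (Fin n) ℝ)
    (h0 : ∀ k i j, 0 ≤ W k i j) (hrow : ∀ k i, ∑ j, W k i j = 1)
    (hcol : ∀ k j, ∑ i, W k i j = 1) (hdiag : ∀ k i, η ≤ W k i i)
    (G : SimpleGraph (Fin n)) (hG : G.Connected)
    (hadj : ∀ i j, G.Adj i j → ∃ l < L, η ≤ W l i j)
    (x : ℕ → Fin n → ℝ) (hx : ∀ k, x (k + 1) = W k *ᵥ x k) (hz : ∑ i, x 0 i = 0) :
    eunorm (x L) ≤ Real.sqrt (1 - η / (n * (n * (2 + 2 * L)) ^ 2)) * eunorm (x 0) := by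
  set N : ℕ → ℝ := fun k => ∑ i, x k i ^ 2 with hN
  have hanti : Antitone N := by
    apply antitone_nat_of_succ_le
    intro k
    simp only [hN, hx k]
    exact diss_nonneg (W k) (h0 k) (hrow k) (hcol k) (x k)
  set D := N 0 - N L with hD
  have hD0 : 0 ≤ D := sub_nonneg.mpr (hanti (Nat.zero_le L))
  set r := Real.sqrt (D / η) with hr
  have hr0 : 0 ≤ r := Real.sqrt_nonneg _
  have hr2 : r ^ 2 = D / η := Real.sq_sqrt (div_nonneg hD0 hη.le)
  have hstep : ∀ k < L, ∀ i j, η ≤ W k i j → |x k j - x (k + 1) i| ≤ r := by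
    intro k hk i j hw
    have h1 := diss_term (W k) (h0 k) (hrow k) (hcol k) (x k) i j
    rw [← hx k] at h1
    have h2 : N k - N (k + 1) ≤ D := by
      have := hanti (Nat.zero_le k)
      have := hanti (Nat.succ_le_of_lt hk)
      simp only [Nat.succ_eq_add_one] at this
      linarith
    have h3 : η * (x k j - x (k + 1) i) ^ 2 ≤ D :=
      (mul_le_mul_of_nonneg_right hw (sq_nonneg _)).trans (h1.trans h2)
    apply Real.abs_le_sqrt
    rw [le_div_iff₀ hη]
    linarith
  have hdrift : ∀ k ≤ L, ∀ i, |x 0 i - x k i| ≤ k * r := by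
    intro k
    induction k with
    | zero => intro _ i; simp
    | succ k ih =>
      intro hk i
      have h1 := ih (by omega) i
      have h2 := hstep k (by omega) i i (hdiag k i)
      have h3 := abs_sub_le (x 0 i) (x k i) (x (k + 1) i)
      push_cast
      linarith
  have hedge : ∀ i j, G.Adj i j → |x 0 i - x 0 j| ≤ (2 + 2 * L) * r := by
    intro i j hij
    obtain ⟨l, hl, hw⟩ := hadj i j hij
    have h1 := hstep l hl i j hw
    have h2 := hstep l hl i i (hdiag l i)
    have h3 := hdrift l hl.le i
    have h4 := hdrift l hl.le j
    have h5 : (l : ℝ) * r ≤ L * r :=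
      mul_le_mul_of_nonneg_right (by exact_mod_cast hl.le) hr0
    rw [abs_le] at *
    constructor <;> linarith [h1.1, h1.2, h2.1, h2.2, h3.1, h3.2, h4.1, h4.2]
  have hR := conn_bound G hG (x 0) _ (by positivity) hedge
  set R := (n : ℝ) * ((2 + 2 * L) * r) with hRdef
  have hR0 : 0 ≤ R := by positivity
  have hnpos : (0 : ℝ) < n := by exact_mod_cast hn
  have hcoord : ∀ i, |x 0 i| ≤ R := by
    intro i
    have h1 : ∑ j, (x 0 i - x 0 j) = n * x 0 i := by
      rw [Finset.sum_sub_distrib, hz]; simp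
    have h2 : |∑ j, (x 0 i - x 0 j)| ≤ ∑ j : Fin n, R :=
      (Finset.abs_sum_le_sum_abs _ _).trans (Finset.sum_le_sum fun j _ => hR i j)
    rw [h1, abs_mul, abs_of_pos hnpos] at h2
    simp only [Finset.sum_const, Finset.card_univ, Fintype.card_fin, nsmul_eq_mul] at h2
    exact le_of_mul_le_mul_left h2 hnpos
  have hN0 : N 0 ≤ n * R ^ 2 := by
    have : N 0 ≤ ∑ j : Fin n, R ^ 2 :=
      Finset.sum_le_sum fun i _ => sq_le_sq.mpr (by rw [abs_of_nonneg hR0]; exact hcoord i)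
    simpa using this
  set M : ℝ := n * (n * (2 + 2 * L)) ^ 2 with hM
  have hMpos : 0 < M := by positivity
  have hN1 : N 0 ≤ M * (D / η) := by
    rw [← hr2]
    calc N 0 ≤ n * R ^ 2 := hN0
      _ = M * r ^ 2 := by rw [hRdef, hM]; ring
  have hfin : N L ≤ (1 - η / M) * N 0 := by
    have h1 : η / M * N 0 ≤ D := by
      calc η / M * N 0 ≤ η / M * (M * (D / η)) :=
            mul_le_mul_of_nonneg_left hN1 (by positivity)
        _ = D := by field_simp
    rw [hD] at h1
    linarith
  have hN0nn : 0 ≤ N 0 := Finset.sum_nonneg fun i _ => sq_nonneg _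
  calc eunorm (x L) = Real.sqrt (N L) := rfl
    _ ≤ Real.sqrt ((1 - η / M) * N 0) := Real.sqrt_le_sqrt hfin
    _ = _ := Real.sqrt_mul' _ hN0nn

/-- Homogeneous trajectory. -/
noncomputable def homTraj {n : ℕ} (W : ℕ → Matrix (Fin n) (Fin n) ℝ) (x0 : Fin n → ℝ) :
    ℕ → Fin n → ℝ
  | 0 => x0
  | k + 1 => W k *ᵥ homTraj W x0 k

theorem perturb {n : ℕ} (W : ℕ → Matrix (Fin n) (Fin n) ℝ)
    (h0 : ∀ k i j, 0 ≤ W k i j) (hrow : ∀ k i, ∑ j, W k i j = 1)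
    (hcol : ∀ k j, ∑ i, W k i j = 1)
    (x u : ℕ → Fin n → ℝ) (hx : ∀ k, x (k + 1) = W k *ᵥ x k + u k) (k : ℕ) :
    eunorm (x k - homTraj W (x 0) k) ≤ ∑ i ∈ Finset.range k, eunorm (u i) := by
  induction k with
  | zero => simp [homTraj, eunorm]
  | succ k ih =>
    rw [Finset.sum_range_succ]
    have h1 : x (k + 1) - homTraj W (x 0) (k + 1)
        = W k *ᵥ (x k - homTraj W (x 0) k) + u k := by
      rw [hx, homTraj, Matrix.mulVec_sub]; abel
    rw [h1]
    refine (eunorm_add_le _ _).trans ?_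
    have := eunorm_mulVec_le (W k) (h0 k) (hrow k) (hcol k) (x k - homTraj W (x 0) k)
    linarith

theorem gain_lemma (L : ℕ) (q a : ℝ) (ha0 : 0 < a) (hq0 : 0 ≤ q)
    (hqa : q < a ^ L) (X U : ℕ → ℝ) (hX : ∀ k, 0 ≤ X k)
    (hrec : ∀ t, X (t + L) ≤ q * X t + ∑ i ∈ Finset.range L, U (t + i))
    (ha1 : a ≤ 1) (K : ℕ) (u : ℝ) (hu : 0 ≤ u) (hU : ∀ k < K, U k ≤ u * a ^ k) :
    ∀ k ≤ K, X k ≤ (∑ j ∈ Finset.range L, X j / a ^ j + L / (a ^ L - q) * u) * a ^ k := by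
  set b := ∑ j ∈ Finset.range L, X j / a ^ j with hb
  have hpos : 0 < a ^ L - q := sub_pos.mpr hqa
  have hCu : 0 ≤ L / (a ^ L - q) * u := by positivity
  have hb0 : 0 ≤ b := Finset.sum_nonneg fun j _ => div_nonneg (hX j) (by positivity)
  intro k
  induction k using Nat.strong_induction_on with
  | _ k ih =>
    intro hk
    by_cases hkL : k < L
    · have h1 : X k / a ^ k ≤ b :=
        Finset.single_le_sum (f := fun j => X j / a ^ j)
          (fun j _ => div_nonneg (hX j) (by positivity)) (Finset.mem_range.mpr hkL)
      rw [← div_le_iff₀ (by positivity)]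
      linarith
    · obtain ⟨t, rfl⟩ : ∃ t, k = t + L := ⟨k - L, by omega⟩
      rcases Nat.eq_zero_or_pos L with hL | hL
      · subst hL
        have h1 := hrec t
        simp at h1 hqa ⊢
        have h2 : 0 ≤ b * a ^ t := by positivity
        nlinarith [hX t]
      have h1 := ih t (by omega) (by omega)
      have h2 : ∑ i ∈ Finset.range L, U (t + i) ≤ ∑ i ∈ Finset.range L, u * a ^ t := by
        apply Finset.sum_le_sum
        intro i hi
        have hi' := Finset.mem_range.mp hi
        refine (hU (t + i) (by omega)).trans ?_
        exact mul_le_mul_of_nonneg_left (pow_le_pow_of_le_one ha0.le ha1 (by omega)) hu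
      simp only [Finset.sum_const, Finset.card_range, nsmul_eq_mul] at h2
      have h3 := hrec t
      have h4 := mul_le_mul_of_nonneg_left h1 hq0
      have h5 : (a ^ L - q) * (L / (a ^ L - q) * u) = L * u := by field_simp
      have h6 : 0 ≤ (a ^ L - q) * b := by positivity
      have h7 : L * u ≤ (a ^ L - q) * (b + L / (a ^ L - q) * u) := by
        rw [mul_add, h5]; linarith
      have h8 := mul_le_mul_of_nonneg_right h7 (pow_nonneg ha0.le t)
      rw [pow_add]
      nlinarith

/-- Centering of a vector. -/
noncomputable def cen {n : ℕ} (x : Fin n → ℝ) : Fin n → ℝ := fun i => x i - (∑ j, x j) / n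

theorem cen_sum {n : ℕ} (hn : 0 < n) (x : Fin n → ℝ) : ∑ i, cen x i = 0 := by
  have hnpos : (n : ℝ) ≠ 0 := by exact_mod_cast hn.ne'
  simp only [cen, Finset.sum_sub_distrib, Finset.sum_const, Finset.card_univ, Fintype.card_fin,
    nsmul_eq_mul]
  field_simp
  ring

theorem cen_add {n : ℕ} (x y : Fin n → ℝ) : cen (x + y) = cen x + cen y := by
  ext i; simp only [cen, Pi.add_apply, Finset.sum_add_distrib]; ring

theorem cen_smul {n : ℕ} (c : ℝ) (x : Fin n → ℝ) : cen (c • x) = c • cen x := by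
  ext i; simp only [cen, Pi.smul_apply, smul_eq_mul, ← Finset.mul_sum]; ring

theorem cen_mulVec {n : ℕ} (W : Matrix (Fin n) (Fin n) ℝ)
    (hrow : ∀ i, ∑ j, W i j = 1) (hcol : ∀ j, ∑ i, W i j = 1) (x : Fin n → ℝ) :
    cen (W *ᵥ x) = W *ᵥ cen x := by
  ext i
  have h1 : ∑ i, (W *ᵥ x) i = ∑ j, x j := by
    simp only [Matrix.mulVec, dotProduct]
    rw [Finset.sum_comm]
    simp only [← Finset.sum_mul, hcol, one_mul]
  have h2 : (W *ᵥ cen x) i = ∑ j, W i j * (x j - (∑ j, x j) / n) := rfl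
  have h3 : cen (W *ᵥ x) i = ∑ j, W i j * x j - (∑ j, x j) / n := by
    simp only [cen, h1]
    rfl
  rw [h2, h3]
  simp only [mul_sub, Finset.sum_sub_distrib, ← Finset.sum_mul, hrow, one_mul]

theorem cen_norm_le {n : ℕ} (hn : 0 < n) (x : Fin n → ℝ) : eunorm (cen x) ≤ eunorm x := by
  have hnpos : (0 : ℝ) < n := by exact_mod_cast hn
  apply Real.sqrt_le_sqrt
  have h1 : ∀ i, cen x i ^ 2 = x i ^ 2 - (2 * ((∑ j, x j) / n)) * x i + ((∑ j, x j) / n) ^ 2 := by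
    intro i; simp only [cen]; ring
  simp only [h1, Finset.sum_add_distrib, Finset.sum_sub_distrib, ← Finset.mul_sum,
    Finset.sum_const, Finset.card_univ, Fintype.card_fin, nsmul_eq_mul]
  have h2 : (2 * ((∑ j, x j) / n)) * (∑ j, x j) = 2 * ((∑ j, x j) ^ 2 / n) := by ring
  have h3 : (n : ℝ) * ((∑ j, x j) / n) ^ 2 = (∑ j, x j) ^ 2 / n := by field_simp
  have h4 : 0 ≤ (∑ j, x j) ^ 2 / (n : ℝ) := by positivity
  rw [h2, h3]; linarith

theorem eunorm_snoc_le {n : ℕ} (v : Fin n → ℝ) (c : ℝ) :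
    eunorm v ≤ eunorm (Fin.snoc v c : Fin (n + 1) → ℝ) := by
  apply Real.sqrt_le_sqrt
  rw [Fin.sum_univ_castSucc]
  simp only [Fin.snoc_castSucc, Fin.snoc_last]
  nlinarith [sq_nonneg c]

theorem le_wnormSeq {d : ℕ} (a : ℝ) (ha : 0 < a) (x : ℕ → Fin d → ℝ) (K k : ℕ) (hk : k ≤ K) :
    eunorm (x k) ≤ wnormSeq a x K * a ^ k := by
  rw [← div_le_iff₀ (by positivity)]
  exact Finset.le_sup' (fun k => eunorm (x k) / a ^ k) (Finset.mem_range.mpr (by omega))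

theorem wnormSeq_le {d : ℕ} (a : ℝ) (ha : 0 < a) (x : ℕ → Fin d → ℝ) (K : ℕ) (c : ℝ)
    (h : ∀ k ≤ K, eunorm (x k) ≤ c * a ^ k) : wnormSeq a x K ≤ c := by
  apply Finset.sup'_le
  intro k hk
  rw [div_le_iff₀ (by positivity)]
  exact h k (by have := Finset.mem_range.mp hk; omega)

theorem wnormSeq_nonneg {d : ℕ} (a : ℝ) (ha : 0 < a) (x : ℕ → Fin d → ℝ) (K : ℕ) :
    0 ≤ wnormSeq a x K := by
  have := le_wnormSeq a ha x K 0 (Nat.zero_le _)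
  simp only [pow_zero, mul_one] at this
  exact (eunorm_nonneg _).trans this

theorem exists_rate (q : ℝ) (hq0 : 0 ≤ q) (hq1 : q < 1) (L : ℕ) (hL : 0 < L) :
    ∃ a ∈ Set.Ioo (0 : ℝ) 1, q < a ^ L := by
  have hL' : (1 : ℝ) ≤ L := by exact_mod_cast hL
  have h1 : 0 < (1 - q) / (2 * L) := div_pos (by linarith) (by linarith)
  have h2 : (1 - q) / (2 * L) < 1 := by rw [div_lt_one (by linarith)]; linarith
  refine ⟨1 - (1 - q) / (2 * L), ⟨by linarith, by linarith⟩, ?_⟩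
  have h3 := one_add_mul_le_pow (a := -((1 - q) / (2 * L))) (by linarith) L
  have h4 : (L : ℝ) * -((1 - q) / (2 * L)) = -((1 - q) / 2) := by field_simp
  rw [h4] at h3
  have h5 : 1 + -((1 - q) / (2 * (L : ℝ))) = 1 - (1 - q) / (2 * L) := by ring
  rw [h5] at h3
  linarith

/-- Proposition 2: the disturbance system over time-varying undirected graphs
is finite-gain stable. -/
theorem stmt6 {n : ℕ} (hn : 0 < n) (m : ℝ) (hm : 0 < m)
    (f : Fin n → ℝ → ℝ) (pl pu ℓ : Fin n → ℝ) (hbox : ∀ i, pl i ≤ pu i)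
    (hf : ∀ i, ContDiff ℝ 2 (f i))
    (hsc : ∀ i, ∀ x ∈ Set.Icc (pl i) (pu i), m ≤ iteratedDeriv 2 (f i) x)
    (nhat : ℝ) (hnhat : 0 < nhat) (ξ : ℝ) (hξ : ξ ∈ Set.Ioc (0 : ℝ) ((n : ℝ) / nhat))
    -- the time-varying undirected communication graph and the weight matrices
    (E : ℕ → Fin n → Fin n → Prop) (hEsymm : ∀ k i j, E k i j → E k j i)
    (W : ℕ → Matrix (Fin n) (Fin n) ℝ) (η : ℝ) (hη : 0 < η)
    (hWsymm : ∀ k, (W k).IsSymm)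
    (hWnonneg : ∀ k i j, 0 ≤ W k i j)
    (hWrow : ∀ k i, ∑ j, W k i j = 1)
    (hWcol : ∀ k j, ∑ i, W k i j = 1)
    (hWedge : ∀ k i j, E k i j → η ≤ W k i j)
    (hWdiag : ∀ k i, η ≤ W k i i)
    (hWzero : ∀ k i j, i ≠ j → ¬ E k i j → W k i j = 0)
    -- B-window connectivity
    (B : ℕ) (hB : 0 < B)
    (hconn : ∀ k : ℕ,
      (SimpleGraph.fromRel fun i j => ∃ l, k * B ≤ l ∧ l < (k + 1) * B ∧ E l i j).Connected)
    -- the equilibrium of the nominal system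
    (pstar : Fin n → ℝ) (lamstar : ℝ)
    (heq : ∀ s : ℝ, 0 < s → ∀ i,
      pstar i = projI (pl i) (pu i)
        (pstar i - s * deriv (f i) (pstar i) + s * ξ * (nhat / (n : ℝ)) * lamstar))
    (hbal : ∑ i, (pstar i - ℓ i) = 0) :
    ∃ a ∈ Set.Ioo (0 : ℝ) 1, ∃ sbar > (0 : ℝ), ∃ α2 > (0 : ℝ),
      ∀ s ∈ Set.Ioo (0 : ℝ) sbar,
        ∀ p lam y : ℕ → Fin n → ℝ,
          (∀ i, y 0 i = nhat * (p 0 i - ℓ i)) →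
          (∀ (k : ℕ) (i : Fin n), p (k + 1) i = projI (pl i) (pu i)
              (p k i - s * deriv (f i) (p k i) + s * ξ * lam k i)) →
          (∀ k : ℕ, lam (k + 1) = W k *ᵥ lam k - s • y k) →
          (∀ k : ℕ, y (k + 1) = W k *ᵥ y k + nhat • (p (k + 1) - p k)) →
          ∃ β2 ≥ (0 : ℝ), ∀ K : ℕ,
            wnormSeq a
                (fun k i => lam k i - (nhat / (n : ℝ)) * ((1 / nhat) * ∑ j, lam k j)) K ≤
              s * α2 *
                  wnormSeq a
                    (fun k => Fin.snoc (fun i => p k i - pstar i)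
                      ((1 / nhat) * (∑ j, lam k j) - lamstar)) K +
                β2 := by
  have hnpos : (0 : ℝ) < n := by exact_mod_cast hn
  set L := 2 * B with hL
  have hLpos : 0 < L := by omega
  set q := Real.sqrt (1 - η / (n * (n * (2 + 2 * L)) ^ 2)) with hq
  have hq0 : 0 ≤ q := Real.sqrt_nonneg _
  have hq1 : q < 1 := by
    rw [hq, Real.sqrt_lt' one_pos]
    have : 0 < η / (n * (n * (2 + 2 * (L : ℝ))) ^ 2) := by positivity
    linarith
  obtain ⟨a, ⟨ha0, ha1⟩, hqa⟩ := exists_rate q hq0 hq1 L hLpos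
  -- recursion for perturbed averaging
  have hrec : ∀ x u : ℕ → Fin n → ℝ, (∀ k, x (k + 1) = W k *ᵥ x k + u k) →
      (∀ k, ∑ i, x k i = 0) → ∀ t, eunorm (x (t + L)) ≤
        q * eunorm (x t) + ∑ i ∈ Finset.range L, eunorm (u (t + i)) := by
    intro x u hx hxz t
    have h1 := perturb (fun k => W (t + k)) (fun k => hWnonneg _) (fun k => hWrow _)
      (fun k => hWcol _) (fun k => x (t + k)) (fun k => u (t + k))
      (fun k => hx (t + k)) L
    have h2 := window_contract hn η hη L (fun k => W (t + k)) (fun k => hWnonneg _)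
      (fun k => hWrow _) (fun k => hWcol _) (fun k => hWdiag _) _ (hconn (t / B + 1)) (by
        intro i j hij
        rw [SimpleGraph.fromRel_adj] at hij
        have hd := Nat.div_add_mod t B
        have hm' := Nat.mod_lt t hB
        have e1 : (t / B + 1) * B = B * (t / B) + B := by ring
        have e2 : (t / B + 1 + 1) * B = B * (t / B) + 2 * B := by ring
        rw [e1, e2] at hij
        have : ∃ l, B * (t / B) + B ≤ l ∧ l < B * (t / B) + 2 * B ∧ E l i j := by
          rcases hij.2 with h | ⟨l, h3, h4, h5⟩
          · exact h
          · exact ⟨l, h3, h4, hEsymm _ _ _ h5⟩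
        obtain ⟨l, h3, h4, h5⟩ := this
        refine ⟨l - t, by omega, ?_⟩
        have : t + (l - t) = l := by omega
        simp only [this]
        exact hWedge _ _ _ h5)
      (homTraj (fun k => W (t + k)) (x t)) (fun k => rfl) (hxz t)
    have h3 := eunorm_add_le (x (t + L) - homTraj (fun k => W (t + k)) (x t) L)
      (homTraj (fun k => W (t + k)) (x t) L)
    rw [sub_add_cancel] at h3
    simp only [add_zero] at h1
    have h4 : eunorm (homTraj (fun k => W (t + k)) (x t) L) ≤ q * eunorm (x t) := h2
    linarith
  set C : ℝ := L / (a ^ L - q) with hC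
  have hCpos : 0 < C := by
    have : (0 : ℝ) < L := by exact_mod_cast hLpos
    exact div_pos this (sub_pos.mpr hqa)
  refine ⟨a, ⟨ha0, ha1⟩, 1, one_pos, 2 * C ^ 2 * nhat, by positivity, ?_⟩
  intro s hs p lam y _ _ hlam hy
  have hs0 : 0 < s := hs.1
  have hyrec : ∀ k, cen (y (k + 1)) = W k *ᵥ cen (y k) + nhat • cen (p (k + 1) - p k) := by
    intro k
    rw [hy, cen_add, cen_smul, cen_mulVec _ (hWrow k) (hWcol k)]
  have herec : ∀ k, cen (lam (k + 1)) = W k *ᵥ cen (lam k) + (-s) • cen (y k) := by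
    intro k
    rw [hlam, sub_eq_add_neg, ← neg_smul, cen_add, cen_smul, cen_mulVec _ (hWrow k) (hWcol k)]
  have hY := hrec (fun k => cen (y k)) _ hyrec (fun k => cen_sum hn _)
  have hE := hrec (fun k => cen (lam k)) _ herec (fun k => cen_sum hn _)
  set b1 := ∑ j ∈ Finset.range L, eunorm (cen (y j)) / a ^ j with hb1
  set b2 := ∑ j ∈ Finset.range L, eunorm (cen (lam j)) / a ^ j with hb2
  have hb1n : 0 ≤ b1 := Finset.sum_nonneg fun j _ => div_nonneg (eunorm_nonneg _) (by positivity)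
  have hb2n : 0 ≤ b2 := Finset.sum_nonneg fun j _ => div_nonneg (eunorm_nonneg _) (by positivity)
  refine ⟨b2 + C * (s * b1), by positivity, ?_⟩
  intro K
  set z : ℕ → Fin (n + 1) → ℝ := fun k => Fin.snoc (fun i => p k i - pstar i)
    ((1 / nhat) * (∑ j, lam k j) - lamstar) with hz
  set Z := wnormSeq a z K with hZ
  have hZ0 : 0 ≤ Z := wnormSeq_nonneg a ha0 z K
  have hpz : ∀ k ≤ K, eunorm (p k - pstar) ≤ Z * a ^ k := fun k hk =>
    (eunorm_snoc_le (p k - pstar) _).trans (le_wnormSeq a ha0 z K k hk)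
  have hU : ∀ k < K, eunorm (nhat • cen (p (k + 1) - p k)) ≤ (2 * nhat * Z) * a ^ k := by
    intro k hk
    rw [eunorm_smul _ hnhat.le]
    have h1 := hpz k hk.le
    have h2 := hpz (k + 1) hk
    have h3 : Z * a ^ (k + 1) ≤ Z * a ^ k :=
      mul_le_mul_of_nonneg_left (pow_le_pow_of_le_one ha0.le ha1.le (by omega)) hZ0
    have h4 := cen_norm_le hn (p (k + 1) - p k)
    have h5 := eunorm_sub_le (p (k + 1) - pstar) (p k - pstar)
    rw [sub_sub_sub_cancel_right] at h5
    have h6 : eunorm (cen (p (k + 1) - p k)) ≤ 2 * (Z * a ^ k) := by linarith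
    have h7 := mul_le_mul_of_nonneg_left h6 hnhat.le
    linarith
  have hYb := gain_lemma L q a ha0 hq0 hqa (fun k => eunorm (cen (y k))) _
    (fun k => eunorm_nonneg _) hY ha1.le K (2 * nhat * Z) (by positivity) hU
  have hEb := gain_lemma L q a ha0 hq0 hqa (fun k => eunorm (cen (lam k)))
    (fun k => eunorm ((-s) • cen (y k)))
    (fun k => eunorm_nonneg _) hE ha1.le K (s * (b1 + C * (2 * nhat * Z))) (by positivity) (by
      intro k hk
      have h1 := hYb k hk.le
      have h2 : eunorm ((-s) • cen (y k)) = s * eunorm (cen (y k)) := by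
        rw [← eunorm_smul s hs0.le]
        simp [eunorm]
      simp only [h2]
      rw [mul_assoc]
      exact mul_le_mul_of_nonneg_left h1 hs0.le)
  apply wnormSeq_le a ha0
  intro k hk
  have h1 := hEb k hk
  have h2 : (fun i => lam k i - (nhat / (n : ℝ)) * ((1 / nhat) * ∑ j, lam k j)) = cen (lam k) := by
    ext i
    simp only [cen]
    field_simp
  rw [h2]
  refine h1.trans (le_of_eq ?_)
  rw [← hC]
  ring
end

section
/- (Lemma on v, robust push-sum) Let n ≤ N be positive integers, γ ∈ (0,1), B a positive integer, and τ := min(γ, 1−γ)/n. Let {P̃[k]}_{k≥0} be N×N column-stochastic nonnegative matrices such that: (i) P̃_{ii}[k] ≥ 1/n for every i ∈ {1,…,n} and every k; (ii) for every k ≥ 0 and every t ≥ (N−1)(2B−1), all entries of the product P̃[k+t−1]···P̃[k] are at least τ^{(N−1)(2B−1)}; and (iii) for every virtual index l ∈ {n+1,…,N} there exists j ∈ {1,…,n} such that P̃_{lj}[k] ≥ (1−γ)/n for every k. Define v[k+1] := P̃[k]v[k] with v[0] = (𝟙_n; 0_{N−n}) (ones on the first n coordinates, zeros elsewhere). Then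 for every i ∈ {1,…,N} and every k ≥ 1: v_i[k] ≥ ((1−γ)/n)·τ^{N(2B−1)}. -/
open Matrix

/-- Lemma on `v` for the robust push-sum over the augmented (virtual-node) network:
entrywise positive lower bound on the push-sum weights. -/
theorem stmt13 (n N : ℕ) (hn : 0 < n) (hnN : n ≤ N)
    (γ : ℝ) (hγ : γ ∈ Set.Ioo (0 : ℝ) 1)
    (B : ℕ) (hB : 0 < B)
    (τ : ℝ) (hτ : τ = min γ (1 - γ) / n)
    (P : ℕ → Matrix (Fin N) (Fin N) ℝ)
    (hPnonneg : ∀ k i j, 0 ≤ P k i j)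
    (hPcol : ∀ k j, ∑ i, P k i j = 1)
    -- (i) actual nodes have self-weight at least 1/n
    (hdiag : ∀ (k : ℕ) (i : Fin N), (i : ℕ) < n → 1 / (n : ℝ) ≤ P k i i)
    -- (ii) products over long windows have entries bounded below
    (prodP : ℕ → ℕ → Matrix (Fin N) (Fin N) ℝ)
    (hprod0 : ∀ k, prodP k 0 = 1)
    (hprodS : ∀ k t, prodP k (t + 1) = P (k + t) * prodP k t)
    (hwindow : ∀ k t, (N - 1) * (2 * B - 1) ≤ t →
        ∀ i j, τ ^ ((N - 1) * (2 * B - 1)) ≤ prodP k t i j)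
    -- (iii) every virtual node receives from some actual node with weight ≥ (1-γ)/n
    (hvirt : ∀ l : Fin N, n ≤ (l : ℕ) →
        ∃ j : Fin N, (j : ℕ) < n ∧ ∀ k, (1 - γ) / n ≤ P k l j)
    (v : ℕ → Fin N → ℝ)
    (hv0 : ∀ i : Fin N, v 0 i = if (i : ℕ) < n then 1 else 0)
    (hvrec : ∀ k, v (k + 1) = P k *ᵥ v k) :
    ∀ (i : Fin N) (k : ℕ), 1 ≤ k →
      ((1 - γ) / n) * τ ^ (N * (2 * B - 1)) ≤ v k i := by
  obtain ⟨hγ0, hγ1⟩ := hγ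
  have hnR : (0 : ℝ) < n := by exact_mod_cast hn
  have hn1 : (1 : ℝ) ≤ n := by exact_mod_cast hn
  have hτ0 : 0 < τ := by
    rw [hτ]
    exact div_pos (lt_min hγ0 (by linarith)) hnR
  have hτn : τ ≤ 1 / (n : ℝ) := by
    rw [hτ]
    exact div_le_div_of_nonneg_right ((min_le_left _ _).trans hγ1.le) hnR.le
  have hinv1 : 1 / (n : ℝ) ≤ 1 := by
    rw [div_le_one hnR]
    exact hn1
  have hτ1 : τ ≤ 1 := hτn.trans hinv1
  have hc0 : 0 ≤ (1 - γ) / (n : ℝ) := div_nonneg (by linarith) hnR.le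
  have hc1 : (1 - γ) / (n : ℝ) ≤ 1 := by
    rw [div_le_one hnR]
    linarith
  have hvnn : ∀ k i, 0 ≤ v k i := by
    intro k
    induction k with
    | zero =>
      intro i
      rw [hv0]
      split_ifs <;> norm_num
    | succ k ih =>
      intro i
      rw [hvrec]
      show 0 ≤ ∑ j, P k i j * v k j
      exact Finset.sum_nonneg fun j _ => mul_nonneg (hPnonneg k i j) (ih j)
  have hstep : ∀ k i j, P k i j * v k j ≤ v (k + 1) i := by
    intro k i j
    rw [hvrec]
    exact Finset.single_le_sum (f := fun j => P k i j * v k j)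
      (fun j _ => mul_nonneg (hPnonneg k i j) (hvnn k j)) (Finset.mem_univ j)
  have hvprod : ∀ k, v k = prodP 0 k *ᵥ v 0 := by
    intro k
    induction k with
    | zero => rw [hprod0, Matrix.one_mulVec]
    | succ k ih =>
      rw [hvrec, hprodS, ← Matrix.mulVec_mulVec, ← ih, Nat.zero_add]
  have hpnn : ∀ k i j, 0 ≤ prodP 0 k i j := by
    intro k
    induction k with
    | zero =>
      intro i j
      rw [hprod0, Matrix.one_apply]
      split_ifs <;> norm_num
    | succ k ih =>
      intro i j
      rw [hprodS, Matrix.mul_apply]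
      exact Finset.sum_nonneg fun l _ => mul_nonneg (hPnonneg _ i l) (ih l j)
  have hpow : ∀ k (i : Fin N), (i : ℕ) < n → τ ^ k ≤ v k i := by
    intro k i hi
    induction k with
    | zero => simp [hv0, hi]
    | succ k ih =>
      calc τ ^ (k + 1) = τ * τ ^ k := pow_succ' _ _
        _ ≤ P k i i * v k i :=
          mul_le_mul (hτn.trans (hdiag k i hi)) ih (pow_nonneg hτ0.le _) (hPnonneg _ _ _)
        _ ≤ _ := hstep k i i
  have hact : ∀ k (i : Fin N), (i : ℕ) < n → τ ^ ((N - 1) * (2 * B - 1)) ≤ v k i := by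
    intro k i hi
    rcases le_total ((N - 1) * (2 * B - 1)) k with h | h
    · have h1 := hwindow 0 k h i i
      have h2 : prodP 0 k i i * v 0 i ≤ v k i := by
        rw [hvprod k]
        exact Finset.single_le_sum (f := fun j => prodP 0 k i j * v 0 j)
          (fun j _ => mul_nonneg (hpnn k i j) (hvnn 0 j)) (Finset.mem_univ i)
      rw [hv0, if_pos hi, mul_one] at h2
      exact h1.trans h2
    · exact (pow_le_pow_of_le_one hτ0.le hτ1 h).trans (hpow k i hi)
  have hle : τ ^ (N * (2 * B - 1)) ≤ τ ^ ((N - 1) * (2 * B - 1)) :=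
    pow_le_pow_of_le_one hτ0.le hτ1 (Nat.mul_le_mul_right _ (Nat.sub_le _ _))
  have hp0 : 0 ≤ τ ^ (N * (2 * B - 1)) := pow_nonneg hτ0.le _
  intro i k hk
  rcases lt_or_ge (i : ℕ) n with hi | hi
  · exact (mul_le_of_le_one_left hp0 hc1).trans (hle.trans (hact k i hi))
  · obtain ⟨j, hj, hPj⟩ := hvirt i hi
    obtain ⟨m, rfl⟩ : ∃ m, k = m + 1 := ⟨k - 1, by omega⟩
    exact (mul_le_mul (hPj m) (hle.trans (hact m j hj)) hp0 (hPnonneg _ _ _)).trans (hstep m i j)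
end
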